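/- Let p, K be positive natural numbers and let A be a p × K integer matrix of rank p over ℚ that is unimodular, i.e., every p × p submatrix of A has determinant equal to 0, 1, or −1. Then a vector m : Fin K → ℤ is a circuit of A if and only if m is primitive for A; in other words, the circuit basis of A coincides with the Graver basis of A. -/

import Mathlib

/-!
A circuit of any integer matrix is primitive: a kernel vector that is conformal to a circuit `m`
has its support inside `supp m`, hence is an integer multiple `c • m` (`circuit_dvd`), and being
dominated by `m` forces `c = 1`.

For the converse, every nonzero kernel vector `m` has a conformal kernel vector `v` of minimal
support (`exists_conformal_minimal`). Unimodularity makes each nonzero entry `v j` divide all the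
entries of `v` (`dvd_of_minimal`): the columns indexed by `supp v \ {j}` extend to a column basis,
whose determinant is `±1`, so column `j` is an integral combination of that basis, and this gives an
integral kernel vector `w` with `v = v j • w`. Hence `v` is a multiple of its sign vector, which is
therefore a kernel vector dominated by `m`. If `m` is primitive it equals that sign vector, so it has
minimal support and an entry `±1`.
-/

/-- The support of an integer vector: the set of indices with nonzero entry. -/
def supp {K : ℕ} (m : Fin K → ℤ) : Set (Fin K) := {j : Fin K | m j ≠ 0}

/-- A circuit of an integer matrix `A`: a nonzero integer kernel vector of `A` whose
entries have gcd `1` and whose support is minimal (no nonzero kernel vector has support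
strictly contained in it). -/
def IsCircuit {p K : ℕ} (A : Matrix (Fin p) (Fin K) ℤ) (m : Fin K → ℤ) : Prop :=
  m ≠ 0 ∧ A.mulVec m = 0 ∧ Finset.univ.gcd m = 1 ∧
    ¬ ∃ v : Fin K → ℤ, v ≠ 0 ∧ A.mulVec v = 0 ∧ supp v ⊂ supp m

/-- A primitive vector for `A` (an element of the Graver basis of `A`): a nonzero kernel
vector `m` of `A` such that no nonzero kernel vector `g ≠ m` has positive part bounded by
the positive part of `m` and negative part bounded by the negative part of `m`. -/
def IsPrimitive {p K : ℕ} (A : Matrix (Fin p) (Fin K) ℤ) (m : Fin K → ℤ) : Prop :=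
  m ≠ 0 ∧ A.mulVec m = 0 ∧
    ¬ ∃ g : Fin K → ℤ, g ≠ 0 ∧ g ≠ m ∧ A.mulVec g = 0 ∧
      (∀ j, max (g j) 0 ≤ max (m j) 0) ∧ (∀ j, max (-(g j)) 0 ≤ max (-(m j)) 0)

/-! ### Kernel vectors of minimal support -/

/-- `v` is a nonzero kernel vector of `A` whose support is minimal; no condition on the gcd of its
entries is imposed. -/
def IsMinimalKer {p K : ℕ} (A : Matrix (Fin p) (Fin K) ℤ) (v : Fin K → ℤ) : Prop :=
  v ≠ 0 ∧ A.mulVec v = 0 ∧ ¬ ∃ w : Fin K → ℤ, w ≠ 0 ∧ A.mulVec w = 0 ∧ supp w ⊂ supp v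

/-- A kernel vector supported inside `supp v` and vanishing at a point of `supp v` is zero. -/
lemma IsMinimalKer.eq_zero {p K : ℕ} {A : Matrix (Fin p) (Fin K) ℤ} {v w : Fin K → ℤ}
    (hv : IsMinimalKer A v) (hw : A.mulVec w = 0) (hsub : ∀ i, v i = 0 → w i = 0)
    {j : Fin K} (hvj : v j ≠ 0) (hwj : w j = 0) : w = 0 := by
  by_contra hne
  refine hv.2.2 ⟨w, hne, hw, fun i hi hvi => hi (hsub i hvi), fun h => ?_⟩
  exact h (show j ∈ supp v from hvj) hwj

/-! ### Divisibility of entries from unimodularity -/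

/-- Rational independence of columns can be tested on integral relations, by clearing
denominators. -/
lemma linearIndepOn_col_iff {p K : ℕ} (A : Matrix (Fin p) (Fin K) ℤ) (s : Set (Fin K)) :
    LinearIndepOn ℚ (A.map (Int.cast : ℤ → ℚ)).col s ↔
      ∀ v : Fin K → ℤ, A.mulVec v = 0 → (∀ l, l ∉ s → v l = 0) → v = 0 := by
  have key : ∀ l : Fin K →₀ ℤ,
      Finsupp.linearCombination ℤ (A.map (Int.cast : ℤ → ℚ)).col l = 0 ↔ A.mulVec l = 0 := by
    intro l
    rw [Finsupp.linearCombination_apply, Finsupp.sum_fintype _ _ (by simp), funext_iff, funext_iff]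
    refine forall_congr' fun i => ?_
    have : (∑ k, l k • (A.map (Int.cast : ℤ → ℚ)).col k) i = ((A.mulVec l i : ℤ) : ℚ) := by
      simp [Matrix.mulVec, dotProduct, Finset.sum_apply, mul_comm]
    rw [this]
    simp
  rw [LinearIndepOn, ← LinearIndependent.iff_fractionRing ℤ ℚ]
  change LinearIndepOn ℤ (A.map (Int.cast : ℤ → ℚ)).col s ↔ _
  rw [linearIndepOn_iff]
  constructor
  · intro h v hv hs
    have := h (Finsupp.equivFunOnFinite.symm v) ?_ ((key _).2 (by simpa using hv))
    · exact funext fun i => by simpa using DFunLike.congr_fun this i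
    · intro l hl
      by_contra hls
      simp at hl
      exact hl (hs l hls)
  · intro h l hl h0
    refine DFunLike.coe_injective (h l ((key l).1 h0) fun i hi => ?_)
    by_contra hne
    exact hi (hl (by simpa using hne))

/-- In a unimodular matrix of full row rank, each nonzero entry of a kernel vector of minimal support
divides all its entries. -/
lemma dvd_of_minimal {p K : ℕ} {A : Matrix (Fin p) (Fin K) ℤ}
    (hrank : (A.map (Int.cast : ℤ → ℚ)).rank = p)
    (hunimod : ∀ g : Fin p → Fin K,
      (A.submatrix id g).det = 0 ∨ (A.submatrix id g).det = 1 ∨ (A.submatrix id g).det = -1)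
    {v : Fin K → ℤ} (hv : IsMinimalKer A v) {j : Fin K} (hj : v j ≠ 0) (i : Fin K) :
    v j ∣ v i := by
  classical
  have hind : LinearIndepOn ℚ (A.map (Int.cast : ℤ → ℚ)).col (supp v \ {j}) := by
    rw [linearIndepOn_col_iff]
    intro w hw hs
    exact hv.eq_zero hw (fun i hi => hs i fun h => h.1 hi) hj (hs j fun h => h.2 rfl)
  obtain ⟨b, -, hsb, hspan, hb⟩ := exists_linearIndepOn_extension hind (Set.subset_univ _)
  have hcard : Fintype.card b = p := by
    rw [← finrank_span_eq_card hb]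
    refine Eq.trans ?_ hrank
    rw [Matrix.rank_eq_finrank_span_cols]
    have : Set.range (fun x : b => (A.map (Int.cast : ℤ → ℚ)).col x)
        = (A.map (Int.cast : ℤ → ℚ)).col '' b := by
      ext; simp
    have hspan' : Submodule.span ℚ ((A.map (Int.cast : ℤ → ℚ)).col '' b)
        = Submodule.span ℚ (Set.range (A.map (Int.cast : ℤ → ℚ)).col) := by
      refine le_antisymm (Submodule.span_mono (Set.image_subset_range _ _)) ?_
      rw [Submodule.span_le, ← Set.image_univ]
      exact hspan
    rw [this, hspan']
  let e : Fin p ≃ b := (Fintype.equivFinOfCardEq hcard).symm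
  let g : Fin p → Fin K := fun k => e k
  have hunit : IsUnit (A.submatrix id g).det := by
    have h1 : LinearIndependent ℚ ((A.submatrix id g).map (Int.cast : ℤ → ℚ)).col :=
      LinearIndependent.comp hb e e.injective
    rw [Matrix.linearIndependent_cols_iff_isUnit, Matrix.isUnit_iff_isUnit_det] at h1
    have h2 : ((A.submatrix id g).map (Int.cast : ℤ → ℚ)).det
        = (((A.submatrix id g).det : ℤ) : ℚ) := (Int.cast_det _).symm
    rw [h2, isUnit_iff_ne_zero, Int.cast_ne_zero] at h1
    rw [Int.isUnit_iff]
    exact (hunimod g).resolve_left h1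
  -- `x` is the integral coordinate vector of column `j`, and `w` the resulting relation.
  let x : Fin p → ℤ := (A.submatrix id g)⁻¹.mulVec (A.col j)
  have hx : (A.submatrix id g).mulVec x = A.col j := by
    simp only [x]
    rw [Matrix.mulVec_mulVec, Matrix.mul_nonsing_inv _ hunit, Matrix.one_mulVec]
  let w : Fin K → ℤ := Pi.single j 1 - ∑ k, x k • Pi.single (g k) 1
  have hw : A.mulVec w = 0 := by
    simp only [w, Matrix.mulVec_sub, Matrix.mulVec_sum, Matrix.mulVec_smul,
      Matrix.mulVec_single_one]
    rw [← hx, sub_eq_zero]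
    ext i
    simp [Matrix.mulVec, dotProduct, mul_comm]
  have hwb : ∀ l, l ∉ b → w l = if l = j then 1 else 0 := by
    intro l hl
    have : ∀ k, l ≠ g k := fun k h => hl (h ▸ (e k).2)
    simp [w, Pi.single_apply, this]
  have h0 : v - v j • w = 0 := by
    refine (linearIndepOn_col_iff A b).1 hb _ ?_ fun l hl => ?_
    · rw [Matrix.mulVec_sub, Matrix.mulVec_smul, hv.2.1, hw]; simp
    · have hl' := hwb l hl
      by_cases hlj : l = j
      · subst hlj; simp_all
      · have : v l = 0 := by
          by_contra h
          exact hl (hsb ⟨h, hlj⟩)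
        simp [hl', hlj, this]
  exact ⟨w i, by simpa using congrFun (sub_eq_zero.1 h0) i⟩

/-! ### Conformal kernel vectors of minimal support -/

/-- If the support of `m` is not minimal, a suitable combination of `m` and a kernel vector with
smaller support is conformal to `m` and has smaller support. -/
lemma exists_conformal_smaller {p K : ℕ} {A : Matrix (Fin p) (Fin K) ℤ} {m w : Fin K → ℤ}
    (hm : A.mulVec m = 0) (hw0 : w ≠ 0) (hw : A.mulVec w = 0)
    (hsub : supp w ⊂ supp m) :
    ∃ v : Fin K → ℤ, v ≠ 0 ∧ A.mulVec v = 0 ∧ (∀ i, 0 ≤ v i * m i) ∧ supp v ⊂ supp m := by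
  classical
  have hwm : ∀ i, m i = 0 → w i = 0 := fun i hi => by
    by_contra h
    exact hsub.1 (show i ∈ supp w from h) hi
  wlog hpos : ∃ i, 0 < w i * m i generalizing w
  · refine this (w := -w) (neg_ne_zero.2 hw0) (by rw [Matrix.mulVec_neg, hw, neg_zero]) ?_ ?_ ?_
    · have : supp (-w) = supp w := by ext; simp [supp]
      rwa [this]
    · intro i hi; simp [hwm i hi]
    · obtain ⟨i, hi⟩ := Function.ne_iff.1 hw0
      refine ⟨i, ?_⟩
      push Not at hpos
      have h2 : w i * m i ≠ 0 := mul_ne_zero hi fun h => hi (hwm i h)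
      have := lt_of_le_of_ne (hpos i) h2
      simpa using this
  obtain ⟨i₀, hi₀⟩ := hpos
  -- The index maximizing the ratio `w j / m j` is the first one to vanish.
  obtain ⟨j, hjm, hmax⟩ := Finset.exists_max_image (Finset.univ.filter fun i => m i ≠ 0)
    (fun i => (w i : ℚ) / m i) ⟨i₀, by simp; rintro h; simp [h] at hi₀⟩
  simp only [Finset.mem_filter, Finset.mem_univ, true_and] at hjm hmax
  have hcross : ∀ i, m i ≠ 0 → w i * m i * m j ^ 2 ≤ w j * m j * m i ^ 2 := by
    intro i hi
    have h := hmax i hi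
    have hi' : (m i : ℚ) ≠ 0 := by exact_mod_cast hi
    have hj' : (m j : ℚ) ≠ 0 := by exact_mod_cast hjm
    have h3 := mul_le_mul_of_nonneg_right h (by positivity : 0 ≤ (m i : ℚ) ^ 2 * (m j : ℚ) ^ 2)
    have e1 : (w i : ℚ) / m i * ((m i : ℚ) ^ 2 * (m j : ℚ) ^ 2) = w i * m i * m j ^ 2 := by
      field_simp
    have e2 : (w j : ℚ) / m j * ((m i : ℚ) ^ 2 * (m j : ℚ) ^ 2) = w j * m j * m i ^ 2 := by
      field_simp
    rw [e1, e2] at h3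
    exact_mod_cast h3
  have hmi₀ : m i₀ ≠ 0 := by rintro h; simp [h] at hi₀
  have hwj : 0 < w j * m j := by
    have h1 := hcross i₀ hmi₀
    have h2 : 0 < w i₀ * m i₀ * m j ^ 2 := by positivity
    exact pos_of_mul_pos_left (h2.trans_le h1) (sq_nonneg _)
  refine ⟨(w j * m j) • m - (m j ^ 2) • w, ?_, ?_, ?_, ?_, ?_⟩
  · intro h
    obtain ⟨i, him, hiw⟩ := Set.not_subset.1 hsub.2
    have hiw : w i = 0 := by simpa [supp] using hiw
    have := congrFun h i
    simp [hiw] at this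
    rcases this with (h | h) | h
    · simp [h] at hwj
    · exact hjm h
    · exact him h
  · rw [Matrix.mulVec_sub, Matrix.mulVec_smul, Matrix.mulVec_smul, hm, hw]; simp
  · intro i
    by_cases hi : m i = 0
    · simp [hi]
    · have := hcross i hi
      simp
      nlinarith
  · intro i hi hmi
    exact hi (by simp [hmi, hwm i hmi])
  · intro h
    exact h (show j ∈ supp m from hjm) (by simp; ring)

lemma exists_conformal_minimal {p K : ℕ} {A : Matrix (Fin p) (Fin K) ℤ} (m : Fin K → ℤ)
    (hm0 : m ≠ 0) (hm : A.mulVec m = 0) :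
    ∃ v : Fin K → ℤ, IsMinimalKer A v ∧ (∀ i, 0 ≤ v i * m i) ∧ supp v ⊆ supp m := by
  induction hn : (supp m).ncard using Nat.strong_induction_on generalizing m with
  | _ n ih =>
    by_cases hmin : IsMinimalKer A m
    · exact ⟨m, hmin, fun i => mul_self_nonneg _, subset_rfl⟩
    · have : ∃ w : Fin K → ℤ, w ≠ 0 ∧ A.mulVec w = 0 ∧ supp w ⊂ supp m := by
        by_contra h
        exact hmin ⟨hm0, hm, h⟩
      obtain ⟨w, hw0, hw, hsub⟩ := this
      obtain ⟨m', h0, h1, h2, h3⟩ := exists_conformal_smaller hm hw0 hw hsub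
      obtain ⟨v, hv, hc, hs⟩ :=
        ih _ (hn ▸ Set.ncard_lt_ncard h3 (Set.toFinite _)) m' h0 h1 rfl
      refine ⟨v, hv, fun i => ?_, hs.trans h3.1⟩
      by_cases hi : v i = 0
      · simp [hi]
      · have hi' : m' i ≠ 0 := hs (show i ∈ supp v from hi)
        have h4 : 0 ≤ (m' i) ^ 2 * (v i * m i) := by
          have := mul_nonneg (hc i) (h2 i)
          nlinarith
        exact nonneg_of_mul_nonneg_right h4 (by positivity)

/-! ### Circuits and primitive vectors -/

/-- A kernel vector supported inside the support of a circuit is an integer multiple of it. -/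
lemma circuit_dvd {p K : ℕ} {A : Matrix (Fin p) (Fin K) ℤ} {m g : Fin K → ℤ}
    (hm : IsCircuit A m) (hg : A.mulVec g = 0) (hsub : ∀ i, m i = 0 → g i = 0) :
    ∃ c : ℤ, g = c • m := by
  obtain ⟨h0, h1, hgcd, hmin⟩ := hm
  obtain ⟨j, hj⟩ := Function.ne_iff.1 h0
  have hz : m j • g - g j • m = 0 := by
    refine IsMinimalKer.eq_zero ⟨h0, h1, hmin⟩ ?_ (fun i hi => by simp [hi, hsub i hi]) hj ?_
    · rw [Matrix.mulVec_sub, Matrix.mulVec_smul, Matrix.mulVec_smul, hg, h1]; simp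
    · simp [mul_comm]
  have hz' : ∀ i, m j * g i = g j * m i := fun i => by
    simpa using congrFun (sub_eq_zero.1 hz) i
  -- `m j` divides every `g j * m i`, hence divides `g j * gcd m = g j`.
  have hd : m j ∣ g j := by
    have h : m j ∣ Finset.univ.gcd fun i => g j * m i :=
      Finset.dvd_gcd fun i _ => ⟨g i, (hz' i).symm⟩
    rw [Finset.gcd_mul_left, hgcd, mul_one] at h
    exact dvd_normalize_iff.1 h
  obtain ⟨c, hc⟩ := hd
  refine ⟨c, funext fun i => mul_left_cancel₀ hj ?_⟩
  have := hz' i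
  rw [this, hc]
  simp [mul_assoc]

/-- Proposition 2 of the paper, after Sturmfels: if a full row rank
`p × K` integer matrix `A` is unimodular (every `p × p` submatrix has determinant
`0`, `1` or `-1`), then the circuits of `A` are exactly the primitive (Graver basis)
elements of `A`. -/
theorem circuits_eq_graver_of_unimodular (p K : ℕ) (hp : 0 < p) (hK : 0 < K)
    (A : Matrix (Fin p) (Fin K) ℤ)
    (hrank : (A.map (Int.cast : ℤ → ℚ)).rank = p)
    (hunimod : ∀ g : Fin p → Fin K,
      (A.submatrix id g).det = 0 ∨ (A.submatrix id g).det = 1 ∨ (A.submatrix id g).det = -1) :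
    ∀ m : Fin K → ℤ, IsCircuit A m ↔ IsPrimitive A m := by
  intro m
  constructor
  · intro hm
    refine ⟨hm.1, hm.2.1, ?_⟩
    rintro ⟨g, hg0, hgm, hg, hpos, hneg⟩
    obtain ⟨c, rfl⟩ := circuit_dvd hm hg fun i hi => by
      have h1 := hpos i
      have h2 := hneg i
      simp [hi] at h1 h2
      omega
    obtain ⟨j, hj⟩ := Function.ne_iff.1 hm.1
    have h1 := hpos j
    have h2 := hneg j
    have hc0 : c ≠ 0 := by rintro rfl; simp at hg0
    have hc1 : c ≠ 1 := by rintro rfl; simp at hgm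
    simp only [Pi.smul_apply, smul_eq_mul, Pi.zero_apply] at h1 h2 hj
    rcases lt_or_gt_of_ne hc0 with hc | hc <;> rcases lt_or_gt_of_ne hj with hmj | hmj
    · have := mul_pos_of_neg_of_neg hc hmj
      omega
    · have := mul_neg_of_neg_of_pos hc hmj
      omega
    · have : c * m j < m j := by nlinarith [show 2 ≤ c by omega]
      omega
    · have : m j < c * m j := by nlinarith [show 2 ≤ c by omega]
      omega
  · rintro ⟨hm0, hm, hprim⟩
    obtain ⟨v, hv, hconf, hsub⟩ := exists_conformal_minimal m hm0 hm
    obtain ⟨j, hj⟩ := Function.ne_iff.1 hv.1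
    have hdvd := fun i (hi : v i ≠ 0) => dvd_of_minimal hrank hunimod hv hi
    have hsign : v = |v j| • fun i => (v i).sign := by
      funext i
      by_cases hi : v i = 0
      · simp [hi]
      · have habs : |v j| = |v i| :=
          abs_eq_abs.2 (Int.associated_iff.1 (associated_of_dvd_dvd (hdvd j hj i) (hdvd i hi j)))
        simp only [Pi.smul_apply, smul_eq_mul]
        rw [habs, mul_comm, Int.sign_mul_abs]
    have hker : A.mulVec (fun i => (v i).sign) = 0 := by
      have h := hv.2.1
      rw [hsign, Matrix.mulVec_smul] at h
      exact (smul_eq_zero.1 h).resolve_left (abs_ne_zero.2 hj)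
    have hdom : ∀ i, max (v i).sign 0 ≤ max (m i) 0 ∧ max (-(v i).sign) 0 ≤ max (-(m i)) 0 := by
      intro i
      have h1 := hconf i
      rcases lt_trichotomy (v i) 0 with h | h | h
      · have hmi : m i ≠ 0 := hsub (show i ∈ supp v from h.ne)
        have : m i ≤ 0 := by nlinarith
        rw [Int.sign_eq_neg_one_of_neg h]
        omega
      · simp [h]
      · have hmi : m i ≠ 0 := hsub (show i ∈ supp v from h.ne')
        have : 0 ≤ m i := by nlinarith
        rw [Int.sign_eq_one_of_pos h]
        omega
    have heq : (fun i => (v i).sign) = m := by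
      by_contra hne
      refine hprim ⟨_, fun h0 => ?_, hne, hker, fun i => (hdom i).1, fun i => (hdom i).2⟩
      exact hj (Int.sign_eq_zero_iff_zero.1 (congrFun h0 j))
    have hsupp : supp m = supp v := by
      rw [← heq]
      ext i
      simp [supp, Int.sign_eq_zero_iff_zero]
    refine ⟨hm0, hm, ?_, hsupp ▸ hv.2.2⟩
    have hunit : IsUnit (m j) := by
      rw [← heq, Int.isUnit_iff]
      rcases lt_or_gt_of_ne hj with h | h
      · exact Or.inr (Int.sign_eq_neg_one_of_neg h)
      · exact Or.inl (Int.sign_eq_one_of_pos h)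
    have := isUnit_of_dvd_unit (Finset.gcd_dvd (Finset.mem_univ j) (f := m)) hunit
    rw [← Finset.normalize_gcd]
    exact normalize_eq_one.2 this
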